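/- Let G be a strongly connected countable directed graph, F : E → ℝ a function and β ∈ ℝ such that A(β) is transient. Let t = (tᵢ) be a β-summable exit path in G. Then the vector ψ defined by ψ_v = lim_{i→∞} t^β(i)^{−1} Σ_{n≥0} A(β)ⁿ_{v tᵢ} takes values in (0,∞) and is A(β)-harmonic. -/

import Mathlib

open scoped ENNReal NNReal Classical
open Filter MeasureTheory

/-- A countable directed graph: countable sets of vertices and edges with
source and range maps. -/
structure DirGraph where
  V : Type
  E : Type
  countV : Countable V
  countE : Countable E
  s : E → V
  r : E → V

namespace DirGraph

attribute [instance] countV countE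

variable (G : DirGraph)

/-- `μ` is a finite path (a vertex counts as the empty path). -/
def IsPath (μ : List G.E) : Prop := μ.Chain' (fun e f => G.r e = G.s f)

/-- `μ` is a finite path from `u` to `w`. -/
def IsPathFrom (μ : List G.E) (u w : G.V) : Prop :=
  G.IsPath μ ∧ (∀ e ∈ μ.head?, G.s e = u) ∧ (∀ e ∈ μ.getLast?, G.r e = w) ∧ (μ = [] → u = w)

/-- A function `F : E → ℝ` extended to finite paths. -/
def Fsum (F : G.E → ℝ) (μ : List G.E) : ℝ := (μ.map F).sum

/-- The matrix `A(β)` over the vertices, with entries in `[0,∞]`: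
`A(β)_{uw} = Σ_{e : u → w} e^{-β F(e)}`. -/
noncomputable def Amat (F : G.E → ℝ) (β : ℝ) (u w : G.V) : ℝ≥0∞ :=
  ∑' e : {e : G.E // G.s e = u ∧ G.r e = w}, ENNReal.ofReal (Real.exp (-β * F e.1))

/-- The powers of the matrix `A(β)`, defined recursively; `A(β)⁰` is the identity matrix. -/
noncomputable def Apow (F : G.E → ℝ) (β : ℝ) : ℕ → G.V → G.V → ℝ≥0∞
  | 0, u, w => if u = w then 1 else 0
  | n + 1, u, w => ∑' x : G.V, G.Amat F β u x * Apow F β n x w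

/-- A sink is a vertex emitting no edges. -/
def IsSink (v : G.V) : Prop := ∀ e : G.E, G.s e ≠ v

/-- An infinite emitter is a vertex emitting infinitely many edges. -/
def InfEmitter (v : G.V) : Prop := {e : G.E | G.s e = v}.Infinite

/-- A set of vertices is hereditary when it is closed under following edges. -/
def Hereditary (H : Set G.V) : Prop := ∀ e : G.E, G.s e ∈ H → G.r e ∈ H

/-- A set of vertices `H` is saturated when every vertex of `V ∖ V∞` all of whose
successors lie in `H` belongs to `H`. -/
def Saturated (H : Set G.V) : Prop :=
  ∀ v : G.V, ¬ G.IsSink v → ¬ G.InfEmitter v → (∀ e : G.E, G.s e = v → G.r e ∈ H) → v ∈ H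

/-- `G` is cofinal when the only nonempty hereditary and saturated set of
vertices is the whole vertex set. -/
def Cofinal : Prop :=
  ∀ H : Set G.V, H.Nonempty → G.Hereditary H → G.Saturated H → H = Set.univ

/-- The set of non-wandering vertices: those lying on a loop of length ≥ 1. -/
def NW : Set G.V := {v | ∃ μ : List G.E, μ ≠ [] ∧ G.IsPathFrom μ v v}

/-- `G` is strongly connected when there is a finite path between any two vertices. -/
def StronglyConnected : Prop := ∀ u w : G.V, ∃ μ : List G.E, G.IsPathFrom μ u w

/-- `G` is row-finite when every vertex emits only finitely many edges. -/
def RowFinite : Prop := ∀ v : G.V, {e : G.E | G.s e = v}.Finite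

/-- `ψ` is an `A(β)`-harmonic vector. -/
def Harmonic (F : G.E → ℝ) (β : ℝ) (ψ : G.V → ℝ≥0) : Prop :=
  ∀ v : G.V, ∑' w : G.V, G.Amat F β v w * ψ w = (ψ v : ℝ≥0∞)

/-- `A(β)` is transient when `Σ_n A(β)ⁿ_{vv} < ∞` for every vertex. -/
def Transient (F : G.E → ℝ) (β : ℝ) : Prop :=
  ∀ v : G.V, ∑' n : ℕ, G.Apow F β n v v ≠ ⊤

/-- `A(β)` is recurrent when `Σ_n A(β)ⁿ_{vv} = ∞` for some vertex. -/
def Recurrent (F : G.E → ℝ) (β : ℝ) : Prop :=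
  ∃ v : G.V, ∑' n : ℕ, G.Apow F β n v v = ⊤

/-- An exit path: a sequence of vertices joined by edges which leaves every
finite set of vertices. -/
def IsExitPath (t : ℕ → G.V) : Prop :=
  (∀ i : ℕ, ∃ e : G.E, G.s e = t i ∧ G.r e = t (i + 1)) ∧
  ∀ M : Set G.V, M.Finite → ∃ N : ℕ, ∀ i : ℕ, N ≤ i → t i ∉ M

/-- Tail equivalence of vertex sequences. -/
def TailEquiv (t t' : ℕ → G.V) : Prop :=
  ∃ k : ℤ, ∃ N : ℕ, ∀ i : ℕ, N ≤ i → 0 ≤ (i : ℤ) + k ∧ t ((i : ℤ) + k).toNat = t' i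

/-- A simple loop based at `v`: a loop which returns to `v` only at the very end. -/
def IsSimpleLoop (v : G.V) (μ : List G.E) : Prop :=
  μ ≠ [] ∧ G.IsPathFrom μ v v ∧
  ∀ (i : ℕ) (h : i + 1 < μ.length), G.r (μ.get ⟨i, Nat.lt_of_succ_lt h⟩) ≠ v

/-- `lⁿ_{vv}(β)`: the weighted number of simple loops of length `n` based at `v`. -/
noncomputable def loopSum (F : G.E → ℝ) (β : ℝ) (v : G.V) (n : ℕ) : ℝ≥0∞ :=
  ∑' μ : {μ : List G.E // μ.length = n ∧ G.IsSimpleLoop v μ},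
    ENNReal.ofReal (Real.exp (-β * G.Fsum F μ.1))

/-- The space `P(G)` of infinite paths in `G`. -/
def PathSpace : Type := {p : ℕ → G.E // ∀ i : ℕ, G.r (p i) = G.s (p (i + 1))}

/-- The Borel σ-algebra of `P(G)` as a subspace of the product `E^ℕ` with `E`
discrete (for a countable discrete space, the Borel σ-algebra is the power set). -/
instance : MeasurableSpace G.PathSpace :=
  letI : MeasurableSpace G.E := ⊤
  inferInstanceAs (MeasurableSpace {p : ℕ → G.E // ∀ i : ℕ, G.r (p i) = G.s (p (i + 1))})

/-- The cylinder set `Z'(v)` of infinite paths starting at the vertex `v`. -/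
def cylV (v : G.V) : Set G.PathSpace := {p | G.s (p.1 0) = v}

/-- The cylinder set `Z'(μ)` of infinite paths beginning with the finite path `μ`. -/
def cylP (μ : List G.E) : Set G.PathSpace :=
  {p | ∀ (i : ℕ) (h : i < μ.length), p.1 i = μ.get ⟨i, h⟩}

/-- The set `P(G)_wan` of wandering infinite paths: those visiting each vertex
only finitely many times. -/
def wanSet : Set G.PathSpace := {p | ∀ v : G.V, {i : ℕ | G.s (p.1 i) = v}.Finite}

end DirGraph

/-- The quantity `t^β(i)⁻¹ Σ_n A(β)ⁿ_{v tᵢ}` associated to an exit path `t`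
(indexed so that `t 0` is the first vertex `t₁` of the exit path). -/
noncomputable def DirGraph.exitTerm (G : DirGraph) (F : G.E → ℝ) (β : ℝ)
    (t : ℕ → G.V) (v : G.V) (i : ℕ) : ℝ≥0∞ :=
  (∏ j ∈ Finset.range i, G.Amat F β (t j) (t (j + 1)))⁻¹ * ∑' n : ℕ, G.Apow F β n v (t i)

/-!
Let `K = ∑ₙ Aⁿ` be the Green kernel, so that `K = 1 + A K = 1 + K A`. Along a path `t`, the bound
`K A ≤ K` makes `t^β(i)⁻¹ K(v, tᵢ)` nondecreasing in `i`, so the limit is positive as soon as one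
term is. Once `t` has left `v`, the identity `K = 1 + A K` has no diagonal term at `(v, tᵢ)` and
becomes the harmonic equation for these ratios, which passes to the limit by monotone convergence.
The division by `t^β(i)` is legitimate because an infinite entry of `A` would, followed by a path
back, make a diagonal entry of `K` infinite.
-/

theorem tsum_iSup_of_monotone {α ι : Type*} [Preorder ι] [IsDirectedOrder ι]
    {f : α → ι → ℝ≥0∞} (hf : ∀ a, Monotone (f a)) :
    ∑' a, ⨆ i, f a i = ⨆ i, ∑' a, f a i := by
  simp only [ENNReal.tsum_eq_iSup_sum, ENNReal.finsetSum_iSup_of_monotone hf]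
  exact iSup_comm

/-- A square matrix with entries in `[0,∞]` over an arbitrary index set. It is a bare function, so
that `DirGraph.Amat` is one and sums over rows and columns are infinite sums in `ℝ≥0∞`. -/
abbrev NonnegMatrix (V : Type*) := V → V → ℝ≥0∞

namespace NonnegMatrix

variable {V : Type*} (A : NonnegMatrix V)

/-- The powers of a matrix, with the same recursion as `DirGraph.Apow`. -/
noncomputable def pow : ℕ → NonnegMatrix V
  | 0, u, w => if u = w then 1 else 0
  | n + 1, u, w => ∑' x, A u x * pow n x w

/-- The Green kernel `∑ₙ Aⁿ` of a matrix. -/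
noncomputable def green : NonnegMatrix V := fun u w ↦ ∑' n, A.pow n u w

/-- The weight of the first `i` steps of a sequence of indices, written `t^β(i + 1)` for the matrix
`A(β)` of a graph (the sequence starts at `t 0`). -/
noncomputable def pathWeight (t : ℕ → V) (i : ℕ) : ℝ≥0∞ :=
  ∏ j ∈ Finset.range i, A (t j) (t (j + 1))

/-- The Green kernel at `(v, t i)` normalized by the weight of `t` up to `t i`: the matrix form of
`DirGraph.exitTerm`. -/
noncomputable def exitRatio (t : ℕ → V) (v : V) (i : ℕ) : ℝ≥0∞ :=
  (A.pathWeight t i)⁻¹ * A.green v (t i)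

theorem pow_succ_eq_tsum_pow_mul (n : ℕ) (u w : V) :
    A.pow (n + 1) u w = ∑' x, A.pow n u x * A x w := by
  induction n generalizing u with
  | zero => simp [pow]
  | succ n ih =>
    calc A.pow (n + 2) u w
        = ∑' x, A u x * A.pow (n + 1) x w := rfl
      _ = ∑' x, ∑' y, A u x * (A.pow n x y * A y w) := by
          simp only [ih, ENNReal.tsum_mul_left]
      _ = ∑' y, ∑' x, A u x * (A.pow n x y * A y w) := ENNReal.tsum_comm
      _ = ∑' y, A.pow (n + 1) u y * A y w := by
          simp only [pow, ← mul_assoc, ENNReal.tsum_mul_right]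

theorem green_eq_one_add_mul_green (u w : V) :
    A.green u w = (if u = w then 1 else 0) + ∑' x, A u x * A.green x w := by
  simp only [green, ← ENNReal.tsum_mul_left]
  rw [ENNReal.tsum_comm, tsum_eq_zero_add' ENNReal.summable]
  simp only [pow]

theorem green_eq_one_add_green_mul (u w : V) :
    A.green u w = (if u = w then 1 else 0) + ∑' x, A.green u x * A x w := by
  simp only [green, ← ENNReal.tsum_mul_right]
  rw [ENNReal.tsum_comm, tsum_eq_zero_add' ENNReal.summable]
  simp only [pow_succ_eq_tsum_pow_mul]
  rfl

theorem green_self_ne_zero (v : V) : A.green v v ≠ 0 := by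
  simp [A.green_eq_one_add_mul_green v v]

theorem mul_green_le (u x w : V) : A u x * A.green x w ≤ A.green u w := by
  rw [A.green_eq_one_add_mul_green u w]
  exact (ENNReal.le_tsum (f := fun x ↦ A u x * A.green x w) x).trans le_add_self

theorem green_mul_le (u x w : V) : A.green u x * A x w ≤ A.green u w := by
  rw [A.green_eq_one_add_green_mul u w]
  exact (ENNReal.le_tsum (f := fun x ↦ A.green u x * A x w) x).trans le_add_self

variable {A} {t : ℕ → V}

theorem ne_top_of_green_ne_top {u w : V} (hgreen : A.green u u ≠ ⊤) (hwu : A.green w u ≠ 0) :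
    A u w ≠ ⊤ :=
  (ENNReal.lt_top_of_mul_ne_top_left (ne_top_of_le_ne_top hgreen (A.mul_green_le u w u)) hwu).ne

theorem exitRatio_monotone (hpos : ∀ i, A (t i) (t (i + 1)) ≠ 0)
    (hfin : ∀ i, A (t i) (t (i + 1)) ≠ ⊤) (v : V) : Monotone (A.exitRatio t v) := by
  refine monotone_nat_of_le_succ fun i ↦ ?_
  have hstep : A.green v (t i) ≤ (A (t i) (t (i + 1)))⁻¹ * A.green v (t (i + 1)) := by
    rw [mul_comm, ← div_eq_mul_inv,
      ENNReal.le_div_iff_mul_le (Or.inl (hpos i)) (Or.inl (hfin i))]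
    exact A.green_mul_le v (t i) (t (i + 1))
  calc A.exitRatio t v i
      ≤ (A.pathWeight t i)⁻¹ * ((A (t i) (t (i + 1)))⁻¹ * A.green v (t (i + 1))) :=
        mul_le_mul_right hstep _
    _ = A.exitRatio t v (i + 1) := by
        rw [exitRatio, pathWeight, pathWeight, Finset.prod_range_succ,
          ENNReal.mul_inv (Or.inr (hfin i)) (Or.inr (hpos i)), mul_assoc]

theorem exitRatio_pos (hfin : ∀ i, A (t i) (t (i + 1)) ≠ ⊤) {v : V} {i : ℕ}
    (hv : A.green v (t i) ≠ 0) : 0 < A.exitRatio t v i :=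
  ENNReal.mul_pos (ENNReal.inv_ne_zero.mpr (ENNReal.prod_ne_top fun j _ ↦ hfin j)) hv

theorem tsum_mul_exitRatio_of_ne {v : V} {i : ℕ} (hv : t i ≠ v) :
    ∑' w, A v w * A.exitRatio t w i = A.exitRatio t v i := by
  simp only [exitRatio, mul_left_comm (A v _), ENNReal.tsum_mul_left]
  rw [A.green_eq_one_add_mul_green v (t i), if_neg hv.symm, zero_add]

theorem tsum_mul_iSup_exitRatio (ht : Tendsto t atTop cofinite)
    (hmono : ∀ w, Monotone (A.exitRatio t w)) (v : V) :
    ∑' w, A v w * ⨆ i, A.exitRatio t w i = ⨆ i, A.exitRatio t v i := by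
  have hmono_mul (w : V) : Monotone fun i ↦ A v w * A.exitRatio t w i :=
    (hmono w).const_mul' _
  simp only [ENNReal.mul_iSup]
  rw [tsum_iSup_of_monotone hmono_mul]
  have hharmonic : ∀ᶠ i in atTop, ∑' w, A v w * A.exitRatio t w i = A.exitRatio t v i :=
    (ht.eventually (eventually_cofinite_ne v)).mono fun _ ↦ tsum_mul_exitRatio_of_ne
  exact tendsto_nhds_unique_of_eventuallyEq
    (tendsto_atTop_iSup fun _ _ hij ↦ ENNReal.tsum_le_tsum fun w ↦ hmono_mul w hij)
    (tendsto_atTop_iSup (hmono v)) hharmonic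

end NonnegMatrix

theorem stmt_8_general {V : Type*} {A : NonnegMatrix V} {t : ℕ → V}
    (hpos : ∀ i, A (t i) (t (i + 1)) ≠ 0) (hfin : ∀ i, A (t i) (t (i + 1)) ≠ ⊤)
    (ht : Tendsto t atTop cofinite) (hreach : ∀ v, ∃ i, A.green v (t i) ≠ 0) {ψ : V → ℝ≥0∞}
    (hlim : ∀ v, Tendsto (A.exitRatio t v) atTop (nhds (ψ v))) :
    (∀ v, 0 < ψ v) ∧ ∀ v, ∑' w, A v w * ψ w = ψ v := by
  have hmono := NonnegMatrix.exitRatio_monotone hpos hfin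
  obtain rfl : (fun v ↦ ⨆ i, A.exitRatio t v i) = ψ :=
    funext fun v ↦ iSup_eq_of_tendsto (hmono v) (hlim v)
  refine ⟨fun v ↦ ?_, NonnegMatrix.tsum_mul_iSup_exitRatio ht hmono⟩
  obtain ⟨i, hi⟩ := hreach v
  exact (NonnegMatrix.exitRatio_pos hfin hi).trans_le (le_iSup (A.exitRatio t v) i)

namespace DirGraph

variable {G : DirGraph} {F : G.E → ℝ} {β : ℝ}

theorem isPath_nil : G.IsPath [] :=
  List.isChain_nil

theorem isPath_cons {e : G.E} {μ : List G.E} :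
    G.IsPath (e :: μ) ↔ (∀ f ∈ μ.head?, G.r e = G.s f) ∧ G.IsPath μ :=
  List.isChain_cons

theorem isPathFrom_cons {e : G.E} {μ : List G.E} {u w : G.V} :
    G.IsPathFrom (e :: μ) u w ↔ G.s e = u ∧ G.IsPathFrom μ (G.r e) w := by
  cases μ <;> grind [IsPathFrom, isPath_cons, isPath_nil]

theorem amat_source_range_ne_zero (e : G.E) : G.Amat F β (G.s e) (G.r e) ≠ 0 := by
  have hweight : ENNReal.ofReal (Real.exp (-β * F e)) ≠ 0 :=
    (ENNReal.ofReal_pos.mpr (Real.exp_pos _)).ne'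
  exact fun hzero ↦ hweight (ENNReal.tsum_eq_zero.mp hzero ⟨e, rfl, rfl⟩)

theorem apow_eq_pow (n : ℕ) (u w : G.V) :
    G.Apow F β n u w = NonnegMatrix.pow (G.Amat F β) n u w := by
  induction n generalizing u with
  | zero => rfl
  | succ n ih => simp only [Apow, NonnegMatrix.pow, ih]

theorem tsum_apow_eq_green (u w : G.V) :
    ∑' n, G.Apow F β n u w = NonnegMatrix.green (G.Amat F β) u w :=
  tsum_congr fun n ↦ apow_eq_pow n u w

theorem exitTerm_eq_exitRatio (t : ℕ → G.V) (v : G.V) :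
    G.exitTerm F β t v = NonnegMatrix.exitRatio (G.Amat F β) t v := by
  funext i
  rw [exitTerm, tsum_apow_eq_green]
  rfl

theorem IsPathFrom.green_ne_zero {μ : List G.E} {u w : G.V} (hμ : G.IsPathFrom μ u w) :
    NonnegMatrix.green (G.Amat F β) u w ≠ 0 := by
  induction μ generalizing u with
  | nil =>
    obtain rfl := hμ.2.2.2 rfl
    exact NonnegMatrix.green_self_ne_zero _ u
  | cons e μ ih =>
    obtain ⟨rfl, htail⟩ := isPathFrom_cons.mp hμ
    have hprod := mul_ne_zero (amat_source_range_ne_zero (F := F) (β := β) e) (ih htail)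
    exact ne_bot_of_le_ne_bot hprod (NonnegMatrix.mul_green_le _ _ _ _)

theorem StronglyConnected.green_ne_zero (hSC : G.StronglyConnected) (u w : G.V) :
    NonnegMatrix.green (G.Amat F β) u w ≠ 0 :=
  let ⟨_, hμ⟩ := hSC u w
  hμ.green_ne_zero

theorem Transient.amat_ne_top (hT : G.Transient F β) (hSC : G.StronglyConnected) (u w : G.V) :
    G.Amat F β u w ≠ ⊤ :=
  NonnegMatrix.ne_top_of_green_ne_top (tsum_apow_eq_green u u ▸ hT u) (hSC.green_ne_zero w u)

theorem IsExitPath.amat_ne_zero {t : ℕ → G.V} (ht : G.IsExitPath t) (i : ℕ) :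
    G.Amat F β (t i) (t (i + 1)) ≠ 0 := by
  obtain ⟨e, hs, hr⟩ := ht.1 i
  exact hs ▸ hr ▸ amat_source_range_ne_zero e

theorem IsExitPath.tendsto_cofinite {t : ℕ → G.V} (ht : G.IsExitPath t) :
    Tendsto t atTop cofinite := by
  intro S hS
  obtain ⟨N, hN⟩ := ht.2 Sᶜ hS
  exact (eventually_ge_atTop N).mono fun i hi ↦ not_not.mp (hN i hi)

end DirGraph

/-- the vector associated to a β-summable exit path is finite, strictly
positive and `A(β)`-harmonic. -/
theorem stmt_8 (G : DirGraph) (hSC : G.StronglyConnected) (F : G.E → ℝ) (β : ℝ)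
    (hT : G.Transient F β) (t : ℕ → G.V) (ht : G.IsExitPath t)
    (ψ : G.V → ℝ≥0∞)
    (hlim : ∀ v : G.V,
      Filter.Tendsto (fun i : ℕ => G.exitTerm F β t v i) Filter.atTop (nhds (ψ v)))
    (hfin : ∀ v : G.V, ψ v ≠ ⊤) :
    (∀ v : G.V, 0 < ψ v ∧ ψ v ≠ ⊤) ∧
    (∀ v : G.V, ∑' w : G.V, G.Amat F β v w * ψ w = ψ v) := by
  obtain ⟨hpos, hharmonic⟩ := stmt_8_general ht.amat_ne_zero (fun i ↦ hT.amat_ne_top hSC _ _)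
    ht.tendsto_cofinite (fun v ↦ ⟨0, hSC.green_ne_zero v _⟩)
    fun v ↦ DirGraph.exitTerm_eq_exitRatio t v ▸ hlim v
  exact ⟨fun v ↦ ⟨hpos v, hfin v⟩, hharmonic⟩
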